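/- The space of torsion tensors on ℝ⁴ satisfying (1/3)W_i = Z_{ijk} for every direct ordering (i,j,k,l) equals the internal direct sum Vec ⊕ 𝒜₊ ⊕ Alt, and in particular has dimension 16. -/

import Mathlib

noncomputable section

set_option maxSynthPendingDepth 3

/-- Euclidean `n`-space `ℝⁿ`. -/
abbrev V (n : ℕ) := Fin n → ℝ

/-- Trilinear forms on `ℝⁿ`. -/
abbrev Tri (n : ℕ) := V n →ₗ[ℝ] V n →ₗ[ℝ] V n →ₗ[ℝ] ℝ

/-- The standard inner product on `ℝⁿ`. -/
def inn {n : ℕ} (X Y : V n) : ℝ := ∑ i, X i * Y i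

/-- The standard orthonormal basis of `ℝⁿ`. -/
def stdB {n : ℕ} (i : Fin n) : V n := Pi.single i 1

/-- Torsion tensors: trilinear forms antisymmetric in the first two arguments. -/
def Torsion (n : ℕ) : Submodule ℝ (Tri n) where
  carrier := {T | ∀ X Y Z, T X Y Z = - T Y X Z}
  zero_mem' := by intro X Y Z; simp
  add_mem' := by
    intro T S hT hS X Y Z
    simp only [LinearMap.add_apply]
    linear_combination hT X Y Z + hS X Y Z
  smul_mem' := by
    intro c T hT X Y Z
    simp only [LinearMap.smul_apply, smul_eq_mul]
    linear_combination c * hT X Y Z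

/-- The kernel of the Bianchi map `𝔟(T)(X,Y,Z) = T(X,Y,Z) + T(Y,Z,X) + T(Z,X,Y)`. -/
def kerBianchi (n : ℕ) : Submodule ℝ (Tri n) where
  carrier := {T | ∀ X Y Z, T X Y Z + T Y Z X + T Z X Y = 0}
  zero_mem' := by intro X Y Z; simp
  add_mem' := by
    intro T S hT hS X Y Z
    simp only [LinearMap.add_apply]
    linear_combination hT X Y Z + hS X Y Z
  smul_mem' := by
    intro c T hT X Y Z
    simp only [LinearMap.smul_apply, smul_eq_mul]
    linear_combination c * hT X Y Z

/-- The kernel of the trace map `c(T)(X) = Σⱼ T(X,eⱼ,eⱼ)`. -/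
def kerTrace (n : ℕ) : Submodule ℝ (Tri n) where
  carrier := {T | ∀ X, ∑ j, T X (stdB j) (stdB j) = 0}
  zero_mem' := by intro X; simp
  add_mem' := by
    intro T S hT hS X
    simp only [LinearMap.add_apply, Finset.sum_add_distrib]
    rw [hT X, hS X]; ring
  smul_mem' := by
    intro c T hT X
    simp only [LinearMap.smul_apply, smul_eq_mul, ← Finset.mul_sum]
    rw [hT X, mul_zero]
/-- The Cartan component `𝒜 = ker 𝔟 ∩ ker c` (inside the torsion tensors). -/
def CartanA (n : ℕ) : Submodule ℝ (Tri n) := Torsion n ⊓ kerBianchi n ⊓ kerTrace n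

/-- The vectorial component: tensors `T_ν(X,Y,Z) = ν(X)⟨Y,Z⟩ − ν(Y)⟨X,Z⟩`. -/
def VecT (n : ℕ) : Submodule ℝ (Tri n) where
  carrier := {T | ∃ ν : V n →ₗ[ℝ] ℝ, ∀ X Y Z,
      T X Y Z = ν X * inn Y Z - ν Y * inn X Z}
  zero_mem' := ⟨0, by intro X Y Z; simp⟩
  add_mem' := by
    rintro T S ⟨ν, hν⟩ ⟨ρ, hρ⟩
    refine ⟨ν + ρ, fun X Y Z => ?_⟩
    simp only [LinearMap.add_apply]
    linear_combination hν X Y Z + hρ X Y Z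
  smul_mem' := by
    rintro c T ⟨ν, hν⟩
    refine ⟨c • ν, fun X Y Z => ?_⟩
    simp only [LinearMap.smul_apply, smul_eq_mul]
    linear_combination c * hν X Y Z

/-- The totally alternating trilinear forms. -/
def AltT (n : ℕ) : Submodule ℝ (Tri n) where
  carrier := {T | (∀ X Y Z, T X Y Z = - T Y X Z) ∧ (∀ X Y Z, T X Y Z = - T X Z Y)}
  zero_mem' := ⟨by intro X Y Z; simp, by intro X Y Z; simp⟩
  add_mem' := by
    rintro T S ⟨hT1, hT2⟩ ⟨hS1, hS2⟩
    constructor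
    · intro X Y Z
      simp only [LinearMap.add_apply]
      linear_combination hT1 X Y Z + hS1 X Y Z
    · intro X Y Z
      simp only [LinearMap.add_apply]
      linear_combination hT2 X Y Z + hS2 X Y Z
  smul_mem' := by
    rintro c T ⟨hT1, hT2⟩
    constructor
    · intro X Y Z
      simp only [LinearMap.smul_apply, smul_eq_mul]
      linear_combination c * hT1 X Y Z
    · intro X Y Z
      simp only [LinearMap.smul_apply, smul_eq_mul]
      linear_combination c * hT2 X Y Z


/-! ### Selfdual and anti-selfdual 2-forms on `ℝ⁴` -/

/-- The selfdual 2-form `e⁰∧e¹ + e²∧e³`. -/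
def sd₁ (X Y : V 4) : ℝ := (X 0 * Y 1 - X 1 * Y 0) + (X 2 * Y 3 - X 3 * Y 2)

/-- The selfdual 2-form `e⁰∧e² + e³∧e¹`. -/
def sd₂ (X Y : V 4) : ℝ := (X 0 * Y 2 - X 2 * Y 0) + (X 3 * Y 1 - X 1 * Y 3)

/-- The selfdual 2-form `e⁰∧e³ + e¹∧e²`. -/
def sd₃ (X Y : V 4) : ℝ := (X 0 * Y 3 - X 3 * Y 0) + (X 1 * Y 2 - X 2 * Y 1)

/-- The anti-selfdual 2-form `e⁰∧e¹ − e²∧e³`. -/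
def asd₁ (X Y : V 4) : ℝ := (X 0 * Y 1 - X 1 * Y 0) - (X 2 * Y 3 - X 3 * Y 2)

/-- The anti-selfdual 2-form `e⁰∧e² − e³∧e¹`. -/
def asd₂ (X Y : V 4) : ℝ := (X 0 * Y 2 - X 2 * Y 0) - (X 3 * Y 1 - X 1 * Y 3)

/-- The anti-selfdual 2-form `e⁰∧e³ − e¹∧e²`. -/
def asd₃ (X Y : V 4) : ℝ := (X 0 * Y 3 - X 3 * Y 0) - (X 1 * Y 2 - X 2 * Y 1)

/-- `𝒜₊`: members of `𝒜` such that for every `Z` the 2-form `(X,Y) ↦ T(X,Y,Z)` is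
a combination of the selfdual forms. -/
def Aplus : Submodule ℝ (Tri 4) where
  carrier := {T | T ∈ CartanA 4 ∧ ∀ Z, ∃ a b c : ℝ, ∀ X Y,
      T X Y Z = a * sd₁ X Y + b * sd₂ X Y + c * sd₃ X Y}
  zero_mem' := ⟨(CartanA 4).zero_mem, fun Z => ⟨0, 0, 0, by intro X Y; simp⟩⟩
  add_mem' := by
    rintro T S ⟨hT, hT'⟩ ⟨hS, hS'⟩
    refine ⟨(CartanA 4).add_mem hT hS, fun Z => ?_⟩
    obtain ⟨a, b, c, h⟩ := hT' Z
    obtain ⟨a', b', c', h'⟩ := hS' Z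
    refine ⟨a + a', b + b', c + c', fun X Y => ?_⟩
    simp only [LinearMap.add_apply]
    linear_combination h X Y + h' X Y
  smul_mem' := by
    rintro r T ⟨hT, hT'⟩
    refine ⟨(CartanA 4).smul_mem r hT, fun Z => ?_⟩
    obtain ⟨a, b, c, h⟩ := hT' Z
    refine ⟨r * a, r * b, r * c, fun X Y => ?_⟩
    simp only [LinearMap.smul_apply, smul_eq_mul]
    linear_combination r * h X Y

/-- `𝒜₋`: members of `𝒜` such that for every `Z` the 2-form `(X,Y) ↦ T(X,Y,Z)` is
a combination of the anti-selfdual forms. -/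
def Aminus : Submodule ℝ (Tri 4) where
  carrier := {T | T ∈ CartanA 4 ∧ ∀ Z, ∃ a b c : ℝ, ∀ X Y,
      T X Y Z = a * asd₁ X Y + b * asd₂ X Y + c * asd₃ X Y}
  zero_mem' := ⟨(CartanA 4).zero_mem, fun Z => ⟨0, 0, 0, by intro X Y; simp⟩⟩
  add_mem' := by
    rintro T S ⟨hT, hT'⟩ ⟨hS, hS'⟩
    refine ⟨(CartanA 4).add_mem hT hS, fun Z => ?_⟩
    obtain ⟨a, b, c, h⟩ := hT' Z
    obtain ⟨a', b', c', h'⟩ := hS' Z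
    refine ⟨a + a', b + b', c + c', fun X Y => ?_⟩
    simp only [LinearMap.add_apply]
    linear_combination h X Y + h' X Y
  smul_mem' := by
    rintro r T ⟨hT, hT'⟩
    refine ⟨(CartanA 4).smul_mem r hT, fun Z => ?_⟩
    obtain ⟨a, b, c, h⟩ := hT' Z
    refine ⟨r * a, r * b, r * c, fun X Y => ?_⟩
    simp only [LinearMap.smul_apply, smul_eq_mul]
    linear_combination r * h X Y

/-- `(i,j,k,l)` is a direct ordering when it is an even permutation of `(0,1,2,3)`. -/
def DirectOrdering (i j k l : Fin 4) : Prop :=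
  ∃ σ : Equiv.Perm (Fin 4), Equiv.Perm.sign σ = 1 ∧ σ 0 = i ∧ σ 1 = j ∧ σ 2 = k ∧ σ 3 = l

instance (i j k l : Fin 4) : Decidable (DirectOrdering i j k l) :=
  inferInstanceAs (Decidable (∃ σ : Equiv.Perm (Fin 4),
    Equiv.Perm.sign σ = 1 ∧ σ 0 = i ∧ σ 1 = j ∧ σ 2 = k ∧ σ 3 = l))

/-- `Z_{ijk} = T_{ijj} + T_{ikk} + T_{jkl}` for a direct ordering `(i,j,k,l)`. -/
def Zc (T : Tri 4) (i j k l : Fin 4) : ℝ :=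
  T (stdB i) (stdB j) (stdB j) + T (stdB i) (stdB k) (stdB k) + T (stdB j) (stdB k) (stdB l)

/-- `W_i`: the sum of `Z_{ijk}` over the three direct orderings `(i,j,k,l)` with
first entry `i`. -/
def Wc (T : Tri 4) (i : Fin 4) : ℝ :=
  ∑ j : Fin 4, ∑ k : Fin 4, ∑ l : Fin 4,
    if DirectOrdering i j k l then Zc T i j k l else 0

lemma Zc_add (T S : Tri 4) (i j k l : Fin 4) :
    Zc (T + S) i j k l = Zc T i j k l + Zc S i j k l := by
  simp only [Zc, LinearMap.add_apply]; ring

lemma Zc_smul (c : ℝ) (T : Tri 4) (i j k l : Fin 4) :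
    Zc (c • T) i j k l = c * Zc T i j k l := by
  simp only [Zc, LinearMap.smul_apply, smul_eq_mul]; ring

lemma Wc_add (T S : Tri 4) (i : Fin 4) : Wc (T + S) i = Wc T i + Wc S i := by
  simp only [Wc, ← Finset.sum_add_distrib]
  refine Finset.sum_congr rfl fun j _ => Finset.sum_congr rfl fun k _ =>
    Finset.sum_congr rfl fun l _ => ?_
  split_ifs with h
  · exact Zc_add T S i j k l
  · simp

lemma Wc_smul (c : ℝ) (T : Tri 4) (i : Fin 4) : Wc (c • T) i = c * Wc T i := by
  simp only [Wc, Finset.mul_sum]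
  refine Finset.sum_congr rfl fun j _ => Finset.sum_congr rfl fun k _ =>
    Finset.sum_congr rfl fun l _ => ?_
  split_ifs with h
  · exact Zc_smul c T i j k l
  · simp

lemma Wc_zero (i : Fin 4) : Wc (0 : Tri 4) i = 0 := by
  simp [Wc, Zc]

/-- The space of torsion tensors satisfying `(1/3) W_i = Z_{ijk}` for every direct
ordering `(i,j,k,l)`. -/
def PureSol : Submodule ℝ (Tri 4) where
  carrier := {T | T ∈ Torsion 4 ∧ ∀ i j k l, DirectOrdering i j k l →
      (1/3 : ℝ) * Wc T i = Zc T i j k l}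
  zero_mem' := ⟨(Torsion 4).zero_mem, fun i j k l _ => by rw [Wc_zero]; simp [Zc]⟩
  add_mem' := by
    rintro T S ⟨hT, hT'⟩ ⟨hS, hS'⟩
    refine ⟨(Torsion 4).add_mem hT hS, fun i j k l h => ?_⟩
    rw [Wc_add, Zc_add]
    linear_combination hT' i j k l h + hS' i j k l h
  smul_mem' := by
    rintro c T ⟨hT, hT'⟩
    refine ⟨(Torsion 4).smul_mem c hT, fun i j k l h => ?_⟩
    rw [Wc_smul, Zc_smul]
    linear_combination c * hT' i j k l h

/-!
For a torsion tensor and a direct ordering `(i,j,k,l)` one has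
`Z_{ijk} = c(T)_i + (T_{jkl} - T_{ill})`, because `T_{iii} = 0`; so `T` solves the equations iff the
defect `T_{jkl} - T_{ill}` depends on `i` only. The defects all vanish iff `T` is selfdual in its
first two arguments, and on `T_ν` they equal `-ν_i`; hence the solution space is
`Vec ⊕ (Λ²₊ ⊗ V*)`, of dimension `4 + 12`.

Every torsion tensor is the sum of a vectorial one, an alternating one and a member of `𝒜`. As `Vec`
and `Alt` consist of solutions, the modular law gives `PureSol = Vec ⊕ Alt ⊕ (𝒜 ∩ PureSol)`. The
three defects with the same `i` add up to `𝔟(T)_{jkl} - c(T)_i`, so a solution in `𝒜` has no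
defects: `𝒜 ∩ PureSol = 𝒜₊`. Independence follows by applying `c` and `𝔟`.
-/

/-! ### Torsion tensors on `ℝⁿ` -/

section General

variable {n : ℕ}

lemma stdB_eq_basisFun (i : Fin n) : stdB i = Pi.basisFun ℝ (Fin n) i := by
  simp [stdB]

lemma tri_ext {T S : Tri n}
    (h : ∀ i j k, T (stdB i) (stdB j) (stdB k) = S (stdB i) (stdB j) (stdB k)) : T = S := by
  refine LinearMap.ext_basis (Pi.basisFun ℝ _) (Pi.basisFun ℝ _) fun i j => ?_
  refine (Pi.basisFun ℝ _).ext fun k => ?_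
  simpa only [stdB_eq_basisFun] using h i j k

lemma apply_self_of_mem_torsion {T : Tri n} (hT : T ∈ Torsion n) (X : V n) : T X X = 0 :=
  LinearMap.ext fun Z => self_eq_neg.1 (hT X X Z)

lemma apply_swap_of_mem_torsion {T : Tri n} (hT : T ∈ Torsion n) (X Y : V n) : T X Y = -T Y X :=
  LinearMap.ext fun Z => hT X Y Z

lemma altT_le_torsion : AltT n ≤ Torsion n := fun _ hT => hT.1

lemma apply_self_right_of_mem_altT {T : Tri n} (hT : T ∈ AltT n) (X Y : V n) : T X Y Y = 0 :=
  self_eq_neg.1 (hT.2 X Y Y)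

lemma apply_rotate_of_mem_altT {T : Tri n} (hT : T ∈ AltT n) (X Y Z : V n) :
    T Y Z X = T X Y Z := by
  rw [hT.2 Y Z X, hT.1 Y X Z, neg_neg]

lemma inn_comm (X Y : V n) : inn X Y = inn Y X := dotProduct_comm X Y

lemma inn_stdB (X : V n) (i : Fin n) : inn X (stdB i) = X i := dotProduct_single_one X i

lemma stdB_apply (i j : Fin n) : (stdB i : V n) j = if j = i then 1 else 0 :=
  Pi.single_apply i 1 j

/-- The trace map `T ↦ c(T)`, as a linear map. -/
def traceMap (n : ℕ) : Tri n →ₗ[ℝ] V n →ₗ[ℝ] ℝ where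
  toFun T := ∑ j, (T.flip (stdB j)).flip (stdB j)
  map_add' T S := by ext; simp [Finset.sum_add_distrib]
  map_smul' r T := by ext; simp [Finset.mul_sum]

lemma traceMap_apply (T : Tri n) (X : V n) :
    traceMap n T X = ∑ j, T X (stdB j) (stdB j) := by
  simp [traceMap]

lemma mem_kerTrace_iff {T : Tri n} : T ∈ kerTrace n ↔ traceMap n T = 0 := by
  simp only [LinearMap.ext_iff, traceMap_apply]
  rfl

/-- The permutation of arguments `T ↦ ((X, Y, Z) ↦ T(Y, Z, X))`, as a linear map. -/
def rotateArgs (n : ℕ) : Tri n →ₗ[ℝ] Tri n where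
  toFun T := (LinearMap.lflip.comp T).flip
  map_add' _ _ := rfl
  map_smul' _ _ := rfl

/-- The Bianchi map `𝔟`, as a linear map. -/
def bianchiMap (n : ℕ) : Tri n →ₗ[ℝ] Tri n :=
  LinearMap.id + rotateArgs n + rotateArgs n ∘ₗ rotateArgs n

lemma bianchiMap_apply (T : Tri n) (X Y Z : V n) :
    bianchiMap n T X Y Z = T X Y Z + T Y Z X + T Z X Y := rfl

lemma mem_kerBianchi_iff {T : Tri n} : T ∈ kerBianchi n ↔ bianchiMap n T = 0 := by
  simp only [LinearMap.ext_iff, bianchiMap_apply]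
  rfl

/-- The vectorial torsion tensor `T_ν`, as a linear function of `ν`. -/
def vecTensor (n : ℕ) : (V n →ₗ[ℝ] ℝ) →ₗ[ℝ] Tri n where
  toFun ν := ν.smulRight (dotProductBilin ℝ ℝ) - (ν.smulRight (dotProductBilin ℝ ℝ)).flip
  map_add' ν ρ := by ext; simp [add_mul, add_sub_add_comm]
  map_smul' r ν := by ext; simp [mul_assoc, mul_sub]

lemma vecTensor_apply (ν : V n →ₗ[ℝ] ℝ) (X Y Z : V n) :
    vecTensor n ν X Y Z = ν X * inn Y Z - ν Y * inn X Z := rfl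

lemma range_vecTensor : LinearMap.range (vecTensor n) = VecT n := by
  ext T
  simp only [LinearMap.mem_range, LinearMap.ext_iff, vecTensor_apply, @eq_comm ℝ _ (T _ _ _)]
  rfl

lemma vecTensor_mem_vecT (ν : V n →ₗ[ℝ] ℝ) : vecTensor n ν ∈ VecT n :=
  ⟨ν, vecTensor_apply ν⟩

lemma vecT_le_torsion : VecT n ≤ Torsion n := by
  rintro T ⟨ν, hν⟩ X Y Z
  rw [hν, hν]
  ring

lemma bianchiMap_vecTensor (ν : V n →ₗ[ℝ] ℝ) : bianchiMap n (vecTensor n ν) = 0 := by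
  refine tri_ext fun i j k => ?_
  rw [bianchiMap_apply, vecTensor_apply, vecTensor_apply, vecTensor_apply, inn_comm (stdB k),
    inn_comm (stdB k), inn_comm (stdB j) (stdB i)]
  simp only [LinearMap.zero_apply]
  ring

lemma vecT_le_kerBianchi : VecT n ≤ kerBianchi n := by
  rw [← range_vecTensor]
  rintro _ ⟨ν, rfl⟩
  exact mem_kerBianchi_iff.2 (bianchiMap_vecTensor ν)

lemma traceMap_vecTensor (ν : V n →ₗ[ℝ] ℝ) :
    traceMap n (vecTensor n ν) = ((n : ℝ) - 1) • ν := by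
  refine (Pi.basisFun ℝ _).ext fun i => ?_
  rw [← stdB_eq_basisFun]
  simp [traceMap_apply, vecTensor_apply, inn_stdB, stdB_apply, sub_mul]

lemma altT_le_kerTrace : AltT n ≤ kerTrace n := fun _ hT X =>
  Finset.sum_eq_zero fun j _ => apply_self_right_of_mem_altT hT X (stdB j)

lemma bianchiMap_of_mem_altT {T : Tri n} (hT : T ∈ AltT n) : bianchiMap n T = (3 : ℝ) • T := by
  refine LinearMap.ext fun X => LinearMap.ext fun Y => LinearMap.ext fun Z => ?_
  rw [bianchiMap_apply, ← apply_rotate_of_mem_altT hT Z X Y, apply_rotate_of_mem_altT hT X Y Z]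
  simp only [LinearMap.smul_apply, smul_eq_mul]
  ring

lemma bianchiMap_mem_altT {T : Tri n} (hT : T ∈ Torsion n) : bianchiMap n T ∈ AltT n := by
  constructor <;> intro X Y Z <;> rw [bianchiMap_apply, bianchiMap_apply] <;>
    linear_combination hT X Y Z + hT Y Z X + hT Z X Y

lemma traceMap_vecTensor_eq_zero_iff (hn : n ≠ 1) {ν : V n →ₗ[ℝ] ℝ} :
    traceMap n (vecTensor n ν) = 0 ↔ ν = 0 := by
  rw [traceMap_vecTensor, smul_eq_zero_iff_right (sub_ne_zero.2 (by exact_mod_cast hn))]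

lemma vecTensor_injective (hn : n ≠ 1) : Function.Injective (vecTensor n) :=
  (injective_iff_map_eq_zero _).2 fun ν hν =>
    (traceMap_vecTensor_eq_zero_iff hn).1 (by rw [hν, map_zero])

lemma finrank_vecT (hn : n ≠ 1) : Module.finrank ℝ (VecT n) = n := by
  rw [← range_vecTensor, LinearMap.finrank_range_of_inj (vecTensor_injective hn)]
  simp

lemma disjoint_vecT_kerTrace (hn : n ≠ 1) : Disjoint (VecT n) (kerTrace n) := by
  rw [← range_vecTensor, Submodule.disjoint_def]
  rintro _ ⟨ν, rfl⟩ hν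
  rw [(traceMap_vecTensor_eq_zero_iff hn).1 (mem_kerTrace_iff.1 hν), map_zero]

lemma disjoint_altT_kerBianchi : Disjoint (AltT n) (kerBianchi n) := by
  refine Submodule.disjoint_def.2 fun T hT hb => ?_
  rw [mem_kerBianchi_iff, bianchiMap_of_mem_altT hT] at hb
  exact (smul_eq_zero_iff_right three_ne_zero).1 hb

/-- Subtracting `T_ν` with `ν = c(T)/(n - 1)` removes the trace, and then subtracting `𝔟(T)/3`
removes the image under `𝔟`. -/
lemma torsion_eq_sup (hn : n ≠ 1) : Torsion n = VecT n ⊔ AltT n ⊔ CartanA n := by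
  refine le_antisymm (fun T hT => ?_)
    (sup_le (sup_le vecT_le_torsion altT_le_torsion) (inf_le_left.trans inf_le_left))
  have hn' : (n : ℝ) - 1 ≠ 0 := sub_ne_zero.2 (by exact_mod_cast hn)
  set v := vecTensor n (((n : ℝ) - 1)⁻¹ • traceMap n T)
  set a := (3⁻¹ : ℝ) • bianchiMap n T
  have hv : v ∈ VecT n := vecTensor_mem_vecT _
  have ha : a ∈ AltT n := (AltT n).smul_mem _ (bianchiMap_mem_altT hT)
  have hb : bianchiMap n (T - (v + a)) = 0 := by
    rw [map_sub, map_add, bianchiMap_vecTensor, bianchiMap_of_mem_altT ha,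
      smul_inv_smul₀ three_ne_zero, zero_add, sub_self]
  have hc : traceMap n (T - (v + a)) = 0 := by
    rw [map_sub, map_add, traceMap_vecTensor, smul_inv_smul₀ hn',
      mem_kerTrace_iff.1 (altT_le_kerTrace ha), add_zero, sub_self]
  have hR : T - (v + a) ∈ Torsion n :=
    sub_mem hT (add_mem (vecT_le_torsion hv) (altT_le_torsion ha))
  rw [← add_sub_cancel (v + a) T]
  exact Submodule.add_mem_sup (Submodule.add_mem_sup hv ha)
    ⟨⟨hR, mem_kerBianchi_iff.2 hb⟩, mem_kerTrace_iff.2 hc⟩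

end General

/-! ### Direct orderings -/

section DirectOrderings

variable {i j k l : Fin 4}

lemma directOrdering_iff_mem : DirectOrdering i j k l ↔
    (i, j, k, l) ∈ ([(0,1,2,3), (0,2,3,1), (0,3,1,2), (1,0,3,2), (1,3,2,0), (1,2,0,3),
      (2,3,0,1), (2,0,1,3), (2,1,3,0), (3,2,1,0), (3,1,0,2), (3,0,2,1)] :
      List (Fin 4 × Fin 4 × Fin 4 × Fin 4)) := by
  revert i j k l
  decide +kernel

lemma DirectOrdering.rotate (h : DirectOrdering i j k l) : DirectOrdering i k l j := by
  revert i j k l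
  decide +kernel

lemma DirectOrdering.swap_swap (h : DirectOrdering i j k l) : DirectOrdering j i l k := by
  revert i j k l
  decide +kernel

lemma DirectOrdering.swap_pairs (h : DirectOrdering i j k l) : DirectOrdering k l i j := by
  revert i j k l
  decide +kernel

lemma DirectOrdering.ne_last (h : DirectOrdering i j k l) : i ≠ l ∧ j ≠ l ∧ k ≠ l := by
  revert i j k l
  decide +kernel

lemma DirectOrdering.sum_univ {M : Type*} [AddCommMonoid M] (h : DirectOrdering i j k l)
    (f : Fin 4 → M) : ∑ m, f m = f i + f j + f k + f l := by
  obtain ⟨σ, -, rfl, rfl, rfl, rfl⟩ := h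
  rw [← Equiv.sum_comp σ, Fin.sum_univ_four]

lemma DirectOrdering.eq_or_eq (h : DirectOrdering i j k l) (m : Fin 4) :
    m = i ∨ m = j ∨ m = k ∨ m = l := by
  revert i j k l m
  decide +kernel

lemma DirectOrdering.filter_eq (h : DirectOrdering i j k l) :
    ({p : Fin 4 × Fin 4 × Fin 4 | DirectOrdering i p.1 p.2.1 p.2.2} : Finset _) =
      {(j, k, l), (k, l, j), (l, j, k)} := by
  revert i j k l
  decide +kernel

lemma exists_directOrdering (i : Fin 4) : ∃ j k l, DirectOrdering i j k l := by
  revert i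
  decide +kernel

lemma DirectOrdering.wc_eq (h : DirectOrdering i j k l) (T : Tri 4) :
    Wc T i = Zc T i j k l + Zc T i k l j + Zc T i l j k := by
  have hjl := h.ne_last.2.1
  have hkl := h.ne_last.2.2
  have hsum : Wc T i = ∑ p : Fin 4 × Fin 4 × Fin 4 with DirectOrdering i p.1 p.2.1 p.2.2,
      Zc T i p.1 p.2.1 p.2.2 := by
    simp only [Wc, Finset.sum_filter, Fintype.sum_prod_type]
  rw [hsum, h.filter_eq, Finset.sum_insert (by simp [hjl, hkl]),
    Finset.sum_insert (by simp [hkl]), Finset.sum_singleton, add_assoc]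

end DirectOrderings

/-! ### Selfdual tensors -/

section Selfdual

/-- The 2-form `eᵖ ∧ e^q` on `ℝⁿ`, as a bilinear map. -/
def wedgeForm {n : ℕ} (p q : Fin n) : V n →ₗ[ℝ] V n →ₗ[ℝ] ℝ :=
  let e (r : Fin n) : V n →ₗ[ℝ] ℝ := LinearMap.proj r
  (e p).smulRight (e q) - (e q).smulRight (e p)

/-- The basis `sd₁, sd₂, sd₃` of `Λ²₊`, as bilinear maps. -/
def selfdualForm : Fin 3 → V 4 →ₗ[ℝ] V 4 →ₗ[ℝ] ℝ :=
  ![wedgeForm 0 1 + wedgeForm 2 3, wedgeForm 0 2 + wedgeForm 3 1, wedgeForm 0 3 + wedgeForm 1 2]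

/-- The tensor `∑ₘ sdₘ ⊗ αₘ`, as a linear function of `α`. -/
def selfdualTensor : (Fin 3 → V 4 →ₗ[ℝ] ℝ) →ₗ[ℝ] Tri 4 where
  toFun α := ∑ m, (selfdualForm m).compr₂ (LinearMap.toSpanSingleton ℝ _ (α m))
  map_add' α β := by
    ext
    simp [Finset.sum_add_distrib]
  map_smul' r α := by
    ext
    simp [Finset.mul_sum, mul_left_comm]

lemma selfdualTensor_apply (α : Fin 3 → V 4 →ₗ[ℝ] ℝ) (X Y Z : V 4) :
    selfdualTensor α X Y Z = sd₁ X Y * α 0 Z + sd₂ X Y * α 1 Z + sd₃ X Y * α 2 Z := by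
  simp [selfdualTensor, selfdualForm, wedgeForm, Fin.sum_univ_three, sd₁, sd₂, sd₃]

/-- The space `Λ²₊ ⊗ V*` of trilinear forms that are selfdual in the first two arguments. -/
def SelfdualT : Submodule ℝ (Tri 4) := LinearMap.range selfdualTensor

lemma selfdualT_le_torsion : SelfdualT ≤ Torsion 4 := by
  rintro _ ⟨α, rfl⟩ X Y Z
  simp only [selfdualTensor_apply, sd₁, sd₂, sd₃]
  ring

lemma selfdualTensor_stdB_zero (α : Fin 3 → V 4 →ₗ[ℝ] ℝ) (m : Fin 3) :
    selfdualTensor α (stdB 0) (stdB m.succ) = α m := by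
  ext
  fin_cases m <;> simp [selfdualTensor_apply, sd₁, sd₂, sd₃, stdB_apply]

lemma selfdualTensor_injective : Function.Injective selfdualTensor := fun α β h => by
  funext m
  rw [← selfdualTensor_stdB_zero α, h, selfdualTensor_stdB_zero]

lemma finrank_selfdualT : Module.finrank ℝ SelfdualT = 12 := by
  rw [SelfdualT, LinearMap.finrank_range_of_inj selfdualTensor_injective, Module.finrank_pi_fintype]
  simp

lemma aplus_eq_inf : Aplus = CartanA 4 ⊓ SelfdualT := by
  ext T
  refine and_congr_right fun _ => ⟨fun h => ?_, ?_⟩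
  · refine ⟨fun m => T (stdB 0) (stdB m.succ), ?_⟩
    refine LinearMap.ext fun X => LinearMap.ext fun Y => LinearMap.ext fun Z => ?_
    obtain ⟨a, b, c, habc⟩ := h Z
    have ha : T (stdB 0) (stdB 1) Z = a := by simp [habc, sd₁, sd₂, sd₃, stdB_apply]
    have hb : T (stdB 0) (stdB 2) Z = b := by simp [habc, sd₁, sd₂, sd₃, stdB_apply]
    have hc : T (stdB 0) (stdB 3) Z = c := by simp [habc, sd₁, sd₂, sd₃, stdB_apply]
    simp [selfdualTensor_apply, ha, hb, hc, habc X Y, mul_comm]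
  · rintro ⟨α, rfl⟩ Z
    refine ⟨α 0 Z, α 1 Z, α 2 Z, fun X Y => ?_⟩
    rw [selfdualTensor_apply]
    ring

/-- The number `T_{jkl} - T_{ill}`, whose vanishing for all direct orderings `(i, j, k, l)` is the
obstruction to selfduality of `T` in its first two arguments. -/
def sdDefect (T : Tri 4) (i j k l : Fin 4) : ℝ :=
  T (stdB j) (stdB k) (stdB l) - T (stdB i) (stdB l) (stdB l)

lemma sdDefect_add (T S : Tri 4) (i j k l : Fin 4) :
    sdDefect (T + S) i j k l = sdDefect T i j k l + sdDefect S i j k l := by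
  simp only [sdDefect, LinearMap.add_apply]
  ring

variable {i j k l : Fin 4}

lemma sdDefect_of_mem_selfdualT {T : Tri 4} (hT : T ∈ SelfdualT) (h : DirectOrdering i j k l) :
    sdDefect T i j k l = 0 := by
  obtain ⟨α, rfl⟩ := hT
  simp only [directOrdering_iff_mem, List.mem_cons, Prod.mk.injEq, List.not_mem_nil, or_false] at h
  rcases h with h | h | h | h | h | h | h | h | h | h | h | h <;>
    obtain ⟨rfl, rfl, rfl, rfl⟩ := h <;>
    simp [sdDefect, selfdualTensor_apply, sd₁, sd₂, sd₃, stdB_apply]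

lemma sdDefect_vecTensor (ν : V 4 →ₗ[ℝ] ℝ) (h : DirectOrdering i j k l) :
    sdDefect (vecTensor 4 ν) i j k l = -ν (stdB i) := by
  obtain ⟨hil, hjl, hkl⟩ := h.ne_last
  simp [sdDefect, vecTensor_apply, inn_stdB, stdB_apply, hil.symm, hjl.symm, hkl.symm]

lemma sdDefect_of_mem_altT {T : Tri 4} (hT : T ∈ AltT 4) :
    sdDefect T i j k l = T (stdB j) (stdB k) (stdB l) := by
  rw [sdDefect, apply_self_right_of_mem_altT hT, sub_zero]

/-- `T_{jkm} = T_{ilm}` is, up to antisymmetry, the vanishing of `sdDefect` for the direct ordering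
that is obtained from `(i, j, k, l)` by a double transposition and ends in `m`. -/
lemma apply_eq_apply_of_sdDefect_eq_zero {T : Tri 4} (hT : T ∈ Torsion 4)
    (hd : ∀ i j k l, DirectOrdering i j k l → sdDefect T i j k l = 0)
    (h : DirectOrdering i j k l) : T (stdB j) (stdB k) = T (stdB i) (stdB l) := by
  have hd' : ∀ {i j k l}, DirectOrdering i j k l →
      T (stdB j) (stdB k) (stdB l) = T (stdB i) (stdB l) (stdB l) :=
    fun h => sub_eq_zero.1 (hd _ _ _ _ h)
  refine (Pi.basisFun ℝ _).ext fun m => ?_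
  rw [← stdB_eq_basisFun]
  rcases h.eq_or_eq m with rfl | rfl | rfl | rfl
  · rw [hT, hT (stdB m), hd' h.swap_pairs.swap_swap]
  · rw [hT, hT (stdB i), hd' h.swap_pairs]
  · exact (hd' h.swap_swap).symm
  · exact hd' h

lemma mem_selfdualT_iff {T : Tri 4} : T ∈ SelfdualT ↔
    T ∈ Torsion 4 ∧ ∀ i j k l, DirectOrdering i j k l → sdDefect T i j k l = 0 := by
  refine ⟨fun hT => ⟨selfdualT_le_torsion hT, fun i j k l => sdDefect_of_mem_selfdualT hT⟩, ?_⟩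
  rintro ⟨hT, hd⟩
  have hself := fun j => apply_self_of_mem_torsion hT (stdB j)
  have hswap := fun j k => apply_swap_of_mem_torsion hT (stdB j) (stdB k)
  have h₀₁ := apply_eq_apply_of_sdDefect_eq_zero hT hd (show DirectOrdering 0 2 3 1 by decide)
  have h₀₂ := apply_eq_apply_of_sdDefect_eq_zero hT hd (show DirectOrdering 0 3 1 2 by decide)
  have h₀₃ := apply_eq_apply_of_sdDefect_eq_zero hT hd (show DirectOrdering 0 1 2 3 by decide)
  refine ⟨fun m => T (stdB 0) (stdB m.succ), tri_ext fun j k l => ?_⟩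
  fin_cases j <;> fin_cases k <;>
    simp [selfdualTensor_apply, sd₁, sd₂, sd₃, stdB_apply, hself, hswap 1 0, hswap 2 0, hswap 3 0,
      hswap 2 1, hswap 1 3, hswap 3 2, h₀₁, h₀₂, h₀₃]

end Selfdual

/-! ### The solution space -/

section PureSol

variable {i j k l : Fin 4}

lemma zc_eq_traceMap_add_sdDefect {T : Tri 4} (hT : T ∈ Torsion 4) (h : DirectOrdering i j k l) :
    Zc T i j k l = traceMap 4 T (stdB i) + sdDefect T i j k l := by
  rw [Zc, traceMap_apply, h.sum_univ, apply_self_of_mem_torsion hT, sdDefect,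
    LinearMap.zero_apply]
  ring

lemma mem_pureSol_iff {T : Tri 4} : T ∈ PureSol ↔ T ∈ Torsion 4 ∧
    ∀ i j k l, DirectOrdering i j k l → sdDefect T i j k l = sdDefect T i k l j := by
  refine and_congr_right fun hT => ⟨fun hZ i j k l h => ?_, fun hd i j k l h => ?_⟩
  · have hZ' := (hZ i j k l h).symm.trans (hZ i k l j h.rotate)
    rwa [zc_eq_traceMap_add_sdDefect hT h, zc_eq_traceMap_add_sdDefect hT h.rotate,
      add_right_inj] at hZ'
  · rw [h.wc_eq, zc_eq_traceMap_add_sdDefect hT h, zc_eq_traceMap_add_sdDefect hT h.rotate,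
      zc_eq_traceMap_add_sdDefect hT h.rotate.rotate, hd i j k l h, hd i k l j h.rotate]
    ring

lemma vecT_le_pureSol : VecT 4 ≤ PureSol := by
  rw [← range_vecTensor]
  rintro _ ⟨ν, rfl⟩
  refine mem_pureSol_iff.2 ⟨vecT_le_torsion (vecTensor_mem_vecT ν), fun i j k l h => ?_⟩
  rw [sdDefect_vecTensor ν h, sdDefect_vecTensor ν h.rotate]

lemma altT_le_pureSol : AltT 4 ≤ PureSol := fun T hT =>
  mem_pureSol_iff.2 ⟨altT_le_torsion hT, fun i j k l _ => by
    rw [sdDefect_of_mem_altT hT, sdDefect_of_mem_altT hT,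
      apply_rotate_of_mem_altT hT (stdB j)]⟩

lemma selfdualT_le_pureSol : SelfdualT ≤ PureSol := fun T hT =>
  mem_pureSol_iff.2 ⟨selfdualT_le_torsion hT, fun i j k l h => by
    rw [sdDefect_of_mem_selfdualT hT h, sdDefect_of_mem_selfdualT hT h.rotate]⟩

lemma exists_sdDefect_eq_of_mem_pureSol {T : Tri 4} (hT : T ∈ PureSol) :
    ∃ d : V 4, ∀ i j k l, DirectOrdering i j k l → sdDefect T i j k l = d i := by
  refine ⟨fun i => 1 / 3 * Wc T i - traceMap 4 T (stdB i), fun i j k l h => ?_⟩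
  simp only [hT.2 i j k l h, zc_eq_traceMap_add_sdDefect hT.1 h, add_sub_cancel_left]

lemma pureSol_eq_vecT_sup_selfdualT : PureSol = VecT 4 ⊔ SelfdualT := by
  refine le_antisymm (fun T hT => ?_) (sup_le vecT_le_pureSol selfdualT_le_pureSol)
  obtain ⟨d, hd⟩ := exists_sdDefect_eq_of_mem_pureSol hT
  set v := vecTensor 4 (dotProductBilin ℝ ℝ d)
  have hv : v ∈ VecT 4 := vecTensor_mem_vecT _
  have hsd : v + T ∈ SelfdualT := mem_selfdualT_iff.2
    ⟨add_mem (vecT_le_torsion hv) hT.1, fun i j k l h => by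
      rw [sdDefect_add, sdDefect_vecTensor _ h, hd i j k l h, neg_add_eq_zero]
      exact inn_stdB d i⟩
  rw [← neg_add_cancel_left v T]
  exact Submodule.add_mem_sup (neg_mem hv) hsd

lemma disjoint_vecT_selfdualT : Disjoint (VecT 4) SelfdualT := by
  rw [← range_vecTensor, Submodule.disjoint_def]
  rintro _ ⟨ν, rfl⟩ hν
  suffices h : ν = 0 by rw [h, map_zero]
  refine (Pi.basisFun ℝ _).ext fun i => ?_
  obtain ⟨j, k, l, h⟩ := exists_directOrdering i
  rw [← stdB_eq_basisFun, LinearMap.zero_apply, ← neg_eq_zero, ← sdDefect_vecTensor ν h,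
    sdDefect_of_mem_selfdualT hν h]

lemma finrank_pureSol : Module.finrank ℝ PureSol = 16 := by
  have h := Submodule.finrank_sup_add_finrank_inf_eq (VecT 4) SelfdualT
  rwa [← pureSol_eq_vecT_sup_selfdualT, disjoint_vecT_selfdualT.eq_bot, finrank_bot, add_zero,
    finrank_vecT (by norm_num), finrank_selfdualT] at h

lemma sum_sdDefect_rotate {T : Tri 4} (hT : T ∈ Torsion 4) (h : DirectOrdering i j k l) :
    sdDefect T i j k l + sdDefect T i k l j + sdDefect T i l j k =
      bianchiMap 4 T (stdB j) (stdB k) (stdB l) - traceMap 4 T (stdB i) := by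
  rw [bianchiMap_apply, traceMap_apply, h.sum_univ, apply_self_of_mem_torsion hT,
    LinearMap.zero_apply]
  simp only [sdDefect]
  ring

lemma cartanA_inf_pureSol : CartanA 4 ⊓ PureSol = Aplus := by
  rw [aplus_eq_inf]
  refine le_antisymm (fun T hT => ⟨hT.1, ?_⟩) (inf_le_inf_left _ selfdualT_le_pureSol)
  obtain ⟨⟨⟨hTor, hBianchi⟩, hTrace⟩, hPure⟩ := hT
  obtain ⟨d, hd⟩ := exists_sdDefect_eq_of_mem_pureSol hPure
  refine mem_selfdualT_iff.2 ⟨hTor, fun i j k l h => ?_⟩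
  have hsum := sum_sdDefect_rotate hTor h
  rw [mem_kerBianchi_iff.1 hBianchi, mem_kerTrace_iff.1 hTrace, hd _ _ _ _ h, hd _ _ _ _ h.rotate,
    hd _ _ _ _ h.rotate.rotate] at hsum
  simp only [LinearMap.zero_apply] at hsum
  rw [hd _ _ _ _ h]
  linarith

lemma pureSol_eq_sup : PureSol = VecT 4 ⊔ Aplus ⊔ AltT 4 := by
  have hle : VecT 4 ⊔ AltT 4 ≤ PureSol := sup_le vecT_le_pureSol altT_le_pureSol
  calc PureSol = (VecT 4 ⊔ AltT 4 ⊔ CartanA 4) ⊓ PureSol := by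
        rw [← torsion_eq_sup (by norm_num)]
        exact (inf_eq_right.2 fun _ hT => hT.1).symm
    _ = VecT 4 ⊔ AltT 4 ⊔ Aplus := by rw [sup_inf_assoc_of_le _ hle, cartanA_inf_pureSol]
    _ = VecT 4 ⊔ Aplus ⊔ AltT 4 := sup_right_comm _ _ _

end PureSol

/-- the space of torsion tensors on `ℝ⁴` satisfying `(1/3)W_i = Z_{ijk}`
for every direct ordering equals the internal direct sum `Vec ⊕ 𝒜₊ ⊕ Alt`, and has
dimension 16. -/
theorem puresol_decomposition :
    (PureSol = VecT 4 ⊔ Aplus ⊔ AltT 4) ∧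
    (VecT 4 ⊓ (Aplus ⊔ AltT 4) = ⊥) ∧
    (Aplus ⊓ (VecT 4 ⊔ AltT 4) = ⊥) ∧
    (AltT 4 ⊓ (VecT 4 ⊔ Aplus) = ⊥) ∧
    Module.finrank ℝ ↥PureSol = 16 := by
  have hAplus : Aplus ≤ CartanA 4 := fun _ hT => hT.1
  have hVec : Disjoint (VecT 4) (Aplus ⊔ AltT 4) :=
    (disjoint_vecT_kerTrace (by norm_num)).mono_right
      (sup_le (hAplus.trans inf_le_right) altT_le_kerTrace)
  have hAlt : Disjoint (AltT 4) (VecT 4 ⊔ Aplus) := disjoint_altT_kerBianchi.mono_right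
    (sup_le vecT_le_kerBianchi (hAplus.trans (inf_le_left.trans inf_le_right)))
  have hA : Disjoint Aplus (VecT 4 ⊔ AltT 4) := by
    rw [sup_comm (VecT 4)]
    exact (hAlt.mono_right le_sup_right).symm.disjoint_sup_right_of_disjoint_sup_left hVec.symm
  exact ⟨pureSol_eq_sup, hVec.eq_bot, hA.eq_bot, hAlt.eq_bot, finrank_pureSol⟩
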